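/- Let θ > 0, κ ∈ ℝ, and let u : [0,θ] → (0,∞) be σ_κ-concave. Then u satisfies u'' + κu ≤ 0 in the distributional sense on (0,θ): for every smooth nonnegative function φ with compact support contained in (0,θ), ∫₀^θ u(r)·(φ''(r) + κ·φ(r)) dr ≤ 0. -/

import Mathlib

open Real Set Filter MeasureTheory Topology

/-- Generalized sine: the solution of `v'' + κ v = 0`, `v 0 = 0`, `v' 0 = 1`. -/
noncomputable def sinK (κ r : ℝ) : ℝ :=
  if 0 < κ then Real.sin (Real.sqrt κ * r) / Real.sqrt κ
  else if κ = 0 then r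
  else Real.sinh (Real.sqrt (-κ) * r) / Real.sqrt (-κ)

/-- Generalized cosine: the solution of `v'' + κ v = 0`, `v 0 = 1`, `v' 0 = 0`. -/
noncomputable def cosK (κ r : ℝ) : ℝ :=
  if 0 < κ then Real.cos (Real.sqrt κ * r)
  else if κ = 0 then 1
  else Real.cosh (Real.sqrt (-κ) * r)

/-- Distortion coefficient `σ_κ^{(t)}(θ)` (for `θ < π_κ`; `σ_κ^{(t)}(0) = t`). -/
noncomputable def sigmaCoeff (κ t θ : ℝ) : ℝ :=
  if θ = 0 then t else sinK κ (t * θ) / sinK κ θ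

/-- `u` is `σ_κ`-concave on `I ⊆ ℝ`.  The requirement `θ := |r₁ - r₀| < π_κ`
(encoded by `κ ≤ 0 ∨ |r₁ - r₀| < π/√κ`) expresses that the inequality with the
value `σ_κ^{(t)}(θ) = ∞` for `θ ≥ π_κ` cannot hold for a positive function. -/
def IsSigmaConcaveOn (κ : ℝ) (I : Set ℝ) (u : ℝ → ℝ) : Prop :=
  ∀ r₀ ∈ I, ∀ r₁ ∈ I,
    (r₀ ≠ r₁ → (κ ≤ 0 ∨ |r₁ - r₀| < Real.pi / Real.sqrt κ)) ∧
    ∀ t ∈ Set.Icc (0:ℝ) 1,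
      sigmaCoeff κ (1 - t) |r₁ - r₀| * u r₀ + sigmaCoeff κ t |r₁ - r₀| * u r₁
        ≤ u ((1 - t) * r₀ + t * r₁)

/-- Right derivative `d⁺u(r) = L`, i.e. `(u (r+h) - u r)/h → L` as `h ↓ 0`. -/
def HasRightDerivAt (u : ℝ → ℝ) (r L : ℝ) : Prop :=
  Filter.Tendsto (fun h : ℝ => (u (r + h) - u r) / h) (nhdsWithin 0 (Set.Ioi 0)) (nhds L)

/-- Left derivative `d⁻u(r) = L`, i.e. `(u (r-h) - u r)/(-h) → L` as `h ↓ 0`. -/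
def HasLeftDerivAt (u : ℝ → ℝ) (r L : ℝ) : Prop :=
  Filter.Tendsto (fun h : ℝ => (u (r - h) - u r) / (-h)) (nhdsWithin 0 (Set.Ioi 0)) (nhds L)

/-- The Jacobian function `J_{H,K,N}(r) = (cos_{K/(N-1)}(r) + H/(N-1) sin_{K/(N-1)}(r))₊^{N-1}`. -/
noncomputable def Jac (H K N r : ℝ) : ℝ :=
  (max (cosK (K/(N-1)) r + (H/(N-1)) * sinK (K/(N-1)) r) 0) ^ (N-1)

/-!
Concavity at the midpoint of `[r - h, r + h]` bounds the second difference of `u` at `r` by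
`(2 cos_κ h - 2) u(r)`, which is `(-κ h² + o(h²)) u(r)`. Integrate this against `φ ≥ 0`, move the
second difference from `u` to `φ` by translation invariance of the Lebesgue measure, divide by `h²`
and let `h ↓ 0`. Integrability of `u` near the support of `φ` comes from continuity: on either side
of an interior point, concavity squeezes `u` between two combinations of translates of `sin_κ`.
-/

lemma hasDerivAt_sinK (κ x : ℝ) : HasDerivAt (sinK κ) (cosK κ x) x := by
  unfold sinK cosK
  rcases lt_trichotomy κ 0 with h | rfl | h
  · simp only [h.not_gt, h.ne, if_false]
    have hs : √(-κ) ≠ 0 := (Real.sqrt_pos.2 (neg_pos.2 h)).ne'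
    refine (((hasDerivAt_id' x).const_mul √(-κ)).sinh.div_const √(-κ)).congr_deriv ?_
    field_simp
  · simpa using hasDerivAt_id' x
  · simp only [h, if_true]
    have hs : √κ ≠ 0 := (Real.sqrt_pos.2 h).ne'
    refine (((hasDerivAt_id' x).const_mul √κ).sin.div_const √κ).congr_deriv ?_
    field_simp

lemma hasDerivAt_cosK (κ x : ℝ) : HasDerivAt (cosK κ) (-κ * sinK κ x) x := by
  unfold sinK cosK
  rcases lt_trichotomy κ 0 with h | rfl | h
  · simp only [h.not_gt, h.ne, if_false]
    have hs : √(-κ) ≠ 0 := (Real.sqrt_pos.2 (neg_pos.2 h)).ne'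
    have hsq : √(-κ) ^ 2 = -κ := Real.sq_sqrt (neg_pos.2 h).le
    refine ((hasDerivAt_id' x).const_mul √(-κ)).cosh.congr_deriv ?_
    field_simp
    rw [hsq]
    ring
  · simpa using hasDerivAt_const x (1 : ℝ)
  · simp only [h, if_true]
    have hs : √κ ≠ 0 := (Real.sqrt_pos.2 h).ne'
    have hsq : √κ ^ 2 = κ := Real.sq_sqrt h.le
    refine ((hasDerivAt_id' x).const_mul √κ).cos.congr_deriv ?_
    field_simp
    rw [hsq]
    ring

@[fun_prop]
lemma continuous_sinK (κ : ℝ) : Continuous (sinK κ) :=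
  continuous_iff_continuousAt.2 fun x ↦ (hasDerivAt_sinK κ x).continuousAt

@[fun_prop]
lemma continuous_cosK (κ : ℝ) : Continuous (cosK κ) :=
  continuous_iff_continuousAt.2 fun x ↦ (hasDerivAt_cosK κ x).continuousAt

@[simp]
lemma sinK_zero (κ : ℝ) : sinK κ 0 = 0 := by simp [sinK]

@[simp]
lemma cosK_zero (κ : ℝ) : cosK κ 0 = 1 := by simp [cosK]

@[simp]
lemma cosK_neg (κ x : ℝ) : cosK κ (-x) = cosK κ x := by simp [cosK]

lemma sinK_two_mul (κ x : ℝ) : sinK κ (2 * x) = 2 * sinK κ x * cosK κ x := by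
  unfold sinK cosK
  split_ifs
  · rw [mul_left_comm, Real.sin_two_mul]; ring
  · ring
  · rw [mul_left_comm, Real.sinh_two_mul]; ring

lemma sinK_pos {κ x : ℝ} (hx : 0 < x) (hκ : κ ≤ 0 ∨ x < π / √κ) : 0 < sinK κ x := by
  unfold sinK
  split_ifs with hpos hzero
  · have hs : 0 < √κ := Real.sqrt_pos.2 hpos
    have hlt : √κ * x < π := (lt_div_iff₀' hs).1 (hκ.resolve_left hpos.not_ge)
    exact div_pos (Real.sin_pos_of_pos_of_lt_pi (mul_pos hs hx) hlt) hs
  · exact hx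
  · have hs : 0 < √(-κ) := Real.sqrt_pos.2 (neg_pos.2 ((not_lt.1 hpos).lt_of_ne hzero))
    exact div_pos (Real.sinh_pos_iff.2 (mul_pos hs hx)) hs

/-- The symmetric second difference of `f` at `x` with step `h`, the discrete counterpart of
`h² f''(x)`. -/
def secondDiff {G R : Type*} [AddGroup G] [Ring R] (h : G) (f : G → R) (x : G) : R :=
  f (x + h) + f (x - h) - 2 * f x

lemma exists_secondDiff_eq_mul_sq {f f' f'' : ℝ → ℝ} {r h : ℝ} (hh : 0 < h)
    (hf : ∀ x ∈ Icc (r - h) (r + h), HasDerivAt f (f' x) x)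
    (hf' : ∀ x ∈ Ioo (r - h) (r + h), HasDerivAt f' (f'' x) x) :
    ∃ ξ ∈ Ioo (r - h) (r + h), secondDiff h f r = f'' ξ * h ^ 2 := by
  have hdiff : ∀ s ∈ Icc 0 h,
      HasDerivAt (fun s ↦ secondDiff s f r) (f' (r + s) - f' (r - s)) s := fun s hs ↦ by
    have hplus := (hf (r + s) ⟨by linarith [hs.1], by linarith [hs.2]⟩).comp_const_add r s
    have hminus := (hf (r - s) ⟨by linarith [hs.2], by linarith [hs.1]⟩).comp_const_sub r s
    exact ((hplus.add hminus).sub_const (2 * f r)).congr_deriv (sub_eq_add_neg _ _).symm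
  obtain ⟨s, hs, hratio⟩ := exists_ratio_hasDerivAt_eq_ratio_slope
    (fun s ↦ secondDiff s f r) (fun s ↦ f' (r + s) - f' (r - s)) hh
    (fun s hs ↦ (hdiff s hs).continuousAt.continuousWithinAt)
    (fun s hs ↦ hdiff s (Ioo_subset_Icc_self hs))
    (fun s ↦ s ^ 2) (fun s ↦ 2 * s) (by fun_prop) (fun s _ ↦ by simpa using hasDerivAt_pow 2 s)
  have hsub : Icc (r - s) (r + s) ⊆ Ioo (r - h) (r + h) :=
    Icc_subset_Ioo (by linarith [hs.2]) (by linarith [hs.2])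
  obtain ⟨ξ, hξ, hslope⟩ := exists_hasDerivAt_eq_slope f' f'' (by linarith [hs.1])
    (fun x hx ↦ (hf' x (hsub hx)).continuousAt.continuousWithinAt)
    (fun x hx ↦ hf' x (hsub (Ioo_subset_Icc_self hx)))
  refine ⟨ξ, hsub (Ioo_subset_Icc_self hξ), ?_⟩
  have hs0 : 0 < s := hs.1
  have hzero : secondDiff 0 f r = 0 := by simp only [secondDiff, add_zero, sub_zero]; ring
  have hslope' : f' (r + s) - f' (r - s) = 2 * s * f'' ξ := by
    rw [hslope, show r + s - (r - s) = 2 * s by ring, mul_div_cancel₀ _ (by positivity)]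
  rw [hzero, hslope'] at hratio
  exact mul_left_cancel₀ (by positivity : 2 * s ≠ 0) (by linear_combination -hratio)

lemma tendsto_secondDiff_div_sq {f f' f'' : ℝ → ℝ} {r : ℝ}
    (hf : ∀ᶠ x in 𝓝 r, HasDerivAt f (f' x) x) (hf' : ∀ᶠ x in 𝓝 r, HasDerivAt f' (f'' x) x)
    (hf'' : ContinuousAt f'' r) :
    Tendsto (fun h ↦ secondDiff h f r / h ^ 2) (𝓝[>] 0) (𝓝 (f'' r)) := by
  refine tendsto_def.2 fun s hs ↦ ?_
  obtain ⟨ε, hε, hball⟩ := Metric.eventually_nhds_iff_ball.1 ((hf.and hf').and (hf'' hs))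
  filter_upwards [Ioo_mem_nhdsGT hε] with h ⟨hh, hhε⟩
  have hsub : Icc (r - h) (r + h) ⊆ Metric.ball r ε := by
    rw [Real.ball_eq_Ioo]
    exact Icc_subset_Ioo (by linarith) (by linarith)
  obtain ⟨ξ, hξ, hξ_eq⟩ := exists_secondDiff_eq_mul_sq hh (fun x hx ↦ (hball x (hsub hx)).1.1)
    (fun x hx ↦ (hball x (hsub (Ioo_subset_Icc_self hx))).1.2)
  rw [mem_preimage, hξ_eq, mul_div_cancel_right₀ _ (by positivity)]
  exact (hball ξ (hsub (Ioo_subset_Icc_self hξ))).2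

lemma tendsto_two_sub_two_mul_cosK_div_sq (κ : ℝ) :
    Tendsto (fun h ↦ (2 - 2 * cosK κ h) / h ^ 2) (𝓝[>] 0) (𝓝 κ) := by
  have hlim : Tendsto (fun h ↦ secondDiff h (cosK κ) 0 / h ^ 2) (𝓝[>] 0)
      (𝓝 (-κ * cosK κ 0)) :=
    tendsto_secondDiff_div_sq (f'' := fun x ↦ -κ * cosK κ x) (.of_forall (hasDerivAt_cosK κ))
      (.of_forall fun x ↦ (hasDerivAt_sinK κ x).const_mul (-κ))
      ((continuous_cosK κ).const_mul (-κ)).continuousAt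
  rw [cosK_zero, mul_one] at hlim
  refine (neg_neg κ ▸ hlim.neg).congr fun h ↦ ?_
  simp only [secondDiff, zero_add, zero_sub, cosK_neg, cosK_zero]
  ring

lemma tendsto_integral_mul_secondDiff_div_sq {μ : Measure ℝ} {U f f' f'' : ℝ → ℝ} {M : ℝ}
    (hU : Integrable U μ) (hf : ∀ x, HasDerivAt f (f' x) x) (hf' : ∀ x, HasDerivAt f' (f'' x) x)
    (hf'' : Continuous f'') (hM : ∀ x, |f'' x| ≤ M) :
    Tendsto (fun h ↦ ∫ r, U r * (secondDiff h f r / h ^ 2) ∂μ) (𝓝[>] 0)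
      (𝓝 (∫ r, U r * f'' r ∂μ)) := by
  have hcont : Continuous f := continuous_iff_continuousAt.2 fun x ↦ (hf x).continuousAt
  refine tendsto_integral_filter_of_dominated_convergence (fun r ↦ |U r| * M) ?meas ?bound
    (hU.abs.mul_const M) ?lim
  case meas =>
    refine .of_forall fun h ↦ hU.aestronglyMeasurable.mul (Continuous.aestronglyMeasurable ?_)
    unfold secondDiff
    fun_prop
  case bound =>
    filter_upwards [self_mem_nhdsWithin] with h (hh : 0 < h)
    refine .of_forall fun r ↦ ?_
    obtain ⟨ξ, -, hξ⟩ := exists_secondDiff_eq_mul_sq (r := r) hh (fun x _ ↦ hf x) fun x _ ↦ hf' x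
    rw [hξ, mul_div_cancel_right₀ _ (by positivity), Real.norm_eq_abs, abs_mul]
    exact mul_le_mul_of_nonneg_left (hM ξ) (abs_nonneg _)
  case lim =>
    exact .of_forall fun r ↦ (tendsto_secondDiff_div_sq (.of_forall hf) (.of_forall hf')
      hf''.continuousAt).const_mul (U r)

lemma integral_secondDiff_mul {G R : Type*} [AddGroup G] [MeasurableSpace G] [MeasurableAdd G]
    {μ : Measure G} [μ.IsAddRightInvariant] [NormedRing R] [NormedSpace ℝ R] {f g : G → R} (h : G)
    (hfg : ∀ c, Integrable (fun x ↦ f x * g (x + c)) μ) :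
    ∫ x, secondDiff h f x * g x ∂μ = ∫ x, f x * secondDiff h g x ∂μ := by
  have htranslate (c : G) : (fun x ↦ f (x + c) * g x) = fun x ↦ f (x + c) * g (x + c + -c) := by
    simp only [add_neg_cancel_right]
  have hfg_shift (c : G) : Integrable (fun x ↦ f (x + c) * g x) μ := by
    rw [htranslate]
    exact (hfg (-c)).comp_add_right c
  have hshift (c : G) : ∫ x, f (x + c) * g x ∂μ = ∫ x, f x * g (x + -c) ∂μ := by
    rw [htranslate]
    exact integral_add_right_eq_self (fun x ↦ f x * g (x + -c)) c
  have hzero : Integrable (fun x ↦ f x * g x) μ := by simpa using hfg 0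
  simp only [secondDiff, sub_eq_add_neg _ h, sub_mul, mul_sub, add_mul, mul_add, two_mul]
  rw [integral_sub ((hfg_shift h).fun_add (hfg_shift (-h))) (hzero.fun_add hzero),
    integral_sub ((hfg h).fun_add (hfg (-h))) (hzero.fun_add hzero),
    integral_add (hfg_shift h) (hfg_shift (-h)), integral_add (hfg h) (hfg (-h)),
    hshift h, hshift (-h), neg_neg, add_comm (∫ x, f x * g (x + -h) ∂μ)]

lemma integrable_secondDiff {G R : Type*} [AddGroup G] [MeasurableSpace G] [MeasurableAdd G]
    {μ : Measure G} [μ.IsAddRightInvariant] [NormedRing R] {f : G → R} (hf : Integrable f μ)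
    (h : G) : Integrable (secondDiff h f) μ :=
  ((hf.comp_add_right h).add (by simpa only [sub_eq_add_neg] using hf.comp_add_right (-h))).sub
    (hf.const_mul 2)

lemma tendsto_integral_secondDiff_mul_div_sq {U φ : ℝ → ℝ} (hU : Integrable U)
    (hφ : ContDiff ℝ 2 φ) (hφc : HasCompactSupport φ) :
    Tendsto (fun h ↦ (∫ r, secondDiff h U r * φ r) / h ^ 2) (𝓝[>] 0)
      (𝓝 (∫ r, U r * deriv (deriv φ) r)) := by
  have hφ' : ContDiff ℝ 1 (deriv φ) := hφ.deriv'
  have hφ'' : Continuous (deriv (deriv φ)) := hφ'.continuous_deriv_one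
  obtain ⟨M, hM⟩ := hφc.deriv.deriv.exists_bound_of_continuous hφ''
  have hUφ (s : ℝ) : Integrable fun r ↦ U r * φ (r + s) :=
    hU.locallyIntegrable.integrable_smul_right_of_hasCompactSupport
      (hφ.continuous.comp (continuous_add_const s)) (hφc.comp_homeomorph (Homeomorph.addRight s))
  refine (tendsto_integral_mul_secondDiff_div_sq hU
    (fun x ↦ (hφ.differentiable two_ne_zero x).hasDerivAt)
    (fun x ↦ (hφ'.differentiable one_ne_zero x).hasDerivAt) hφ'' hM).congr fun h ↦ ?_
  simp only [← mul_div_assoc]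
  rw [integral_div, integral_secondDiff_mul h hUφ]

lemma support_mul_deriv_deriv_add_mul_subset (u φ : ℝ → ℝ) (c : ℝ) :
    (Function.support fun r ↦ u r * (deriv (deriv φ) r + c * φ r)) ⊆ tsupport φ := by
  refine Function.support_subset_iff'.2 fun r hr ↦ ?_
  have hr'' : r ∉ tsupport (deriv (deriv φ)) :=
    fun h ↦ hr (tsupport_deriv_subset (tsupport_deriv_subset h))
  rw [image_eq_zero_of_notMem_tsupport hr, image_eq_zero_of_notMem_tsupport hr'', mul_zero,
    add_zero, mul_zero]

lemma integral_mul_deriv_deriv_add_mul_nonpos {U φ a : ℝ → ℝ} {c : ℝ} (hU : Integrable U)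
    (hφ : ContDiff ℝ 2 φ) (hφ0 : ∀ x, 0 ≤ φ x) (hφc : HasCompactSupport φ)
    (ha : Tendsto (fun h ↦ a h / h ^ 2) (𝓝[>] 0) (𝓝 c))
    (hUa : ∀ᶠ h in 𝓝[>] 0, ∀ r ∈ tsupport φ, secondDiff h U r + a h * U r ≤ 0) :
    ∫ r, U r * (deriv (deriv φ) r + c * φ r) ≤ 0 := by
  have hUφ : Integrable fun r ↦ U r * φ r :=
    hU.locallyIntegrable.integrable_smul_right_of_hasCompactSupport hφ.continuous hφc
  have hUφ'' : Integrable fun r ↦ U r * deriv (deriv φ) r :=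
    hU.locallyIntegrable.integrable_smul_right_of_hasCompactSupport
      hφ.deriv'.continuous_deriv_one hφc.deriv.deriv
  have hΔUφ (h : ℝ) : Integrable fun r ↦ secondDiff h U r * φ r :=
    (integrable_secondDiff hU h).locallyIntegrable.integrable_smul_right_of_hasCompactSupport
      hφ.continuous hφc
  have hlim : Tendsto
      (fun h ↦ (∫ r, secondDiff h U r * φ r) / h ^ 2 + a h / h ^ 2 * ∫ r, U r * φ r) (𝓝[>] 0)
      (𝓝 ((∫ r, U r * deriv (deriv φ) r) + c * ∫ r, U r * φ r)) :=
    (tendsto_integral_secondDiff_mul_div_sq hU hφ hφc).add (ha.mul_const _)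
  have hsplit : ∫ r, U r * (deriv (deriv φ) r + c * φ r) =
      (∫ r, U r * deriv (deriv φ) r) + c * ∫ r, U r * φ r := by
    simp only [mul_add, mul_left_comm _ c]
    rw [integral_add hUφ'' (hUφ.const_mul c), integral_const_mul]
  have hmerge (h : ℝ) : (∫ r, secondDiff h U r * φ r) / h ^ 2 + a h / h ^ 2 * ∫ r, U r * φ r =
      (∫ r, (secondDiff h U r + a h * U r) * φ r) / h ^ 2 := by
    simp only [add_mul, mul_assoc]
    rw [integral_add (hΔUφ h) (hUφ.const_mul _), integral_const_mul]
    ring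
  rw [hsplit]
  refine le_of_tendsto hlim (hUa.mono fun h hh ↦ ?_)
  rw [hmerge]
  refine div_nonpos_of_nonpos_of_nonneg (integral_nonpos fun r ↦ ?_) (sq_nonneg h)
  by_cases hr : r ∈ tsupport φ
  · exact mul_nonpos_of_nonpos_of_nonneg (hh r hr) (hφ0 r)
  · simp [image_eq_zero_of_notMem_tsupport hr]

namespace IsSigmaConcaveOn

variable {κ : ℝ} {I : Set ℝ} {u : ℝ → ℝ} {x y z : ℝ}

lemma comp_neg (hu : IsSigmaConcaveOn κ I u) :
    IsSigmaConcaveOn κ (Neg.neg ⁻¹' I) fun r ↦ u (-r) := by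
  intro r₀ hr₀ r₁ hr₁
  have h := hu (-r₀) hr₀ (-r₁) hr₁
  rw [neg_sub_neg, abs_sub_comm, ne_eq, neg_inj] at h
  refine ⟨h.1, fun t ht ↦ (h.2 t ht).trans_eq ?_⟩
  congr 1
  ring

lemma sinK_pos_of_le_sub {t : ℝ} (hu : IsSigmaConcaveOn κ I u) (hx : x ∈ I) (hz : z ∈ I)
    (ht : 0 < t) (htxz : t ≤ z - x) : 0 < sinK κ t := by
  have hxz : x ≠ z := by rintro rfl; linarith
  exact sinK_pos ht (((hu x hx z hz).1 hxz).imp_right (htxz.trans (le_abs_self _)).trans_lt)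

lemma sinK_sub_pos (hu : IsSigmaConcaveOn κ I u) (hx : x ∈ I) (hz : z ∈ I) (hxz : x < z) :
    0 < sinK κ (z - x) :=
  hu.sinK_pos_of_le_sub hx hz (sub_pos.2 hxz) le_rfl

lemma sinK_mul_add_sinK_mul_le (hu : IsSigmaConcaveOn κ I u) (hx : x ∈ I) (hz : z ∈ I)
    (hxy : x ≤ y) (hyz : y ≤ z) :
    sinK κ (z - y) * u x + sinK κ (y - x) * u z ≤ sinK κ (z - x) * u y := by
  rcases (hxy.trans hyz).eq_or_lt with rfl | hxz
  · simp [hxy.antisymm hyz]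
  have hd : 0 < z - x := sub_pos.2 hxz
  have hpos : 0 < sinK κ (z - x) := hu.sinK_sub_pos hx hz hxz
  have ht : (y - x) / (z - x) ∈ Icc (0 : ℝ) 1 :=
    ⟨div_nonneg (sub_nonneg.2 hxy) hd.le, (div_le_one hd).2 (by linarith)⟩
  have hy : (1 - (y - x) / (z - x)) * x + (y - x) / (z - x) * z = y := by field_simp; ring
  have hzy : (1 - (y - x) / (z - x)) * (z - x) = z - y := by field_simp; ring
  have hconc := (hu x hx z hz).2 _ ht
  rw [abs_of_pos hd, hy, sigmaCoeff, sigmaCoeff, if_neg hd.ne', if_neg hd.ne', hzy,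
    div_mul_cancel₀ _ hd.ne', div_mul_eq_mul_div, div_mul_eq_mul_div, ← add_div,
    div_le_iff₀' hpos] at hconc
  exact hconc

lemma secondDiff_add_mul_nonpos {r h : ℝ} (hu : IsSigmaConcaveOn κ I u) (hh : 0 < h)
    (hminus : r - h ∈ I) (hplus : r + h ∈ I) :
    secondDiff h u r + (2 - 2 * cosK κ h) * u r ≤ 0 := by
  have hpos : 0 < sinK κ h := hu.sinK_pos_of_le_sub hminus hplus hh (by linarith)
  have hmid := hu.sinK_mul_add_sinK_mul_le hminus hplus (y := r) (by linarith) (by linarith)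
  rw [show r + h - (r - h) = 2 * h by ring, add_sub_cancel_left, sub_sub_cancel,
    sinK_two_mul] at hmid
  refine nonpos_of_mul_nonpos_right ?_ hpos
  unfold secondDiff
  linarith

lemma continuousWithinAt_Ioi (hu : IsSigmaConcaveOn κ I u) (hy : I ∈ 𝓝 y) :
    ContinuousWithinAt u (Ioi y) y := by
  have hI : ∀ᶠ w in 𝓝 y, w ∈ I := hy
  obtain ⟨x, hx, hxy⟩ := ((hI.filter_mono nhdsWithin_le_nhds).and self_mem_nhdsWithin :
    ∀ᶠ w in 𝓝[<] y, w ∈ I ∧ w < y).exists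
  obtain ⟨z, hz, hyz⟩ := ((hI.filter_mono nhdsWithin_le_nhds).and self_mem_nhdsWithin :
    ∀ᶠ w in 𝓝[>] y, w ∈ I ∧ y < w).exists
  have hyx_pos : 0 < sinK κ (y - x) := hu.sinK_sub_pos hx (mem_of_mem_nhds hy) hxy
  have hzy_pos : 0 < sinK κ (z - y) := hu.sinK_sub_pos (mem_of_mem_nhds hy) hz hyz
  have hlower : Tendsto (fun w ↦ (sinK κ (z - w) * u y + sinK κ (w - y) * u z) / sinK κ (z - y))
      (𝓝 y) (𝓝 (u y)) :=
    Continuous.tendsto' (by fun_prop) _ _ (by simp [hzy_pos.ne'])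
  have hupper : Tendsto (fun w ↦ (sinK κ (w - x) * u y - sinK κ (w - y) * u x) / sinK κ (y - x))
      (𝓝 y) (𝓝 (u y)) :=
    Continuous.tendsto' (by fun_prop) _ _ (by simp [hyx_pos.ne'])
  refine tendsto_of_tendsto_of_tendsto_of_le_of_le' (hlower.mono_left nhdsWithin_le_nhds)
    (hupper.mono_left nhdsWithin_le_nhds) ?_ ?_
  · filter_upwards [Ioo_mem_nhdsGT hyz] with w ⟨hyw, hwz⟩
    rw [div_le_iff₀' hzy_pos]
    exact hu.sinK_mul_add_sinK_mul_le (mem_of_mem_nhds hy) hz hyw.le hwz.le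
  · filter_upwards [self_mem_nhdsWithin, nhdsWithin_le_nhds hy] with w (hyw : y < w) hw
    rw [le_div_iff₀' hyx_pos]
    linarith [hu.sinK_mul_add_sinK_mul_le hx hw hxy.le hyw.le]

lemma continuousAt (hu : IsSigmaConcaveOn κ I u) (hy : I ∈ 𝓝 y) : ContinuousAt u y := by
  refine continuousAt_iff_continuous_left'_right'.2 ⟨?_, hu.continuousWithinAt_Ioi hy⟩
  have hneg : ContinuousWithinAt (fun r ↦ u (-r)) (Ioi (-y)) (-y) :=
    hu.comp_neg.continuousWithinAt_Ioi (continuous_neg.continuousAt (by simpa using hy))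
  simpa [ContinuousWithinAt, Function.comp_def] using hneg.tendsto.comp tendsto_neg_nhdsLT

end IsSigmaConcaveOn

theorem sigmaConcave_distributional_ineq_general {κ : ℝ} {I : Set ℝ} {u φ : ℝ → ℝ}
    (hu : IsSigmaConcaveOn κ I u) (hφ : ContDiff ℝ 2 φ) (hφ0 : ∀ x, 0 ≤ φ x)
    (hφc : HasCompactSupport φ) (hφI : tsupport φ ⊆ interior I) :
    ∫ r, u r * (deriv (deriv φ) r + κ * φ r) ≤ 0 := by
  obtain ⟨δ, hδ, hδI⟩ := hφc.exists_cthickening_subset_open isOpen_interior hφI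
  set C := Metric.cthickening δ (tsupport φ)
  have hC : IsCompact C := hφc.cthickening
  have hCI : C ⊆ I := hδI.trans interior_subset
  have hsub : tsupport φ ⊆ C := Metric.self_subset_cthickening _
  have hU : Integrable (C.indicator u) := by
    refine (ContinuousOn.integrableOn_compact hC fun r hr ↦ ?_).integrable_indicator
      hC.measurableSet
    exact (hu.continuousAt (mem_interior_iff_mem_nhds.1 (hδI hr))).continuousWithinAt
  have hcongr : ∫ r, u r * (deriv (deriv φ) r + κ * φ r) =
      ∫ r, C.indicator u r * (deriv (deriv φ) r + κ * φ r) := by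
    congr 1 with r
    by_cases hr : r ∈ tsupport φ
    · rw [indicator_of_mem (hsub hr)]
    · have hzero (v : ℝ → ℝ) : v r * (deriv (deriv φ) r + κ * φ r) = 0 :=
        Function.support_subset_iff'.1 (support_mul_deriv_deriv_add_mul_subset v φ κ) r hr
      rw [hzero, hzero]
  rw [hcongr]
  refine integral_mul_deriv_deriv_add_mul_nonpos hU hφ hφ0 hφc
    (tendsto_two_sub_two_mul_cosK_div_sq κ) ?_
  filter_upwards [Ioo_mem_nhdsGT hδ] with h ⟨hh, hhδ⟩ r hr
  have hminus : r - h ∈ C := Metric.mem_cthickening_of_dist_le _ r _ _ hr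
    (by simpa [Real.dist_eq, abs_of_pos hh] using hhδ.le)
  have hplus : r + h ∈ C := Metric.mem_cthickening_of_dist_le _ r _ _ hr
    (by simpa [Real.dist_eq, abs_of_pos hh] using hhδ.le)
  simpa only [secondDiff, indicator_of_mem hminus, indicator_of_mem hplus,
    indicator_of_mem (hsub hr)] using hu.secondDiff_add_mul_nonpos hh (hCI hminus) (hCI hplus)

/-- a positive `σ_κ`-concave function on `[0,θ]` satisfies
`u'' + κ u ≤ 0` in the distributional sense on `(0,θ)`:
`∫₀^θ u (φ'' + κ φ) ≤ 0` for every smooth nonnegative `φ` compactly supported in `(0,θ)`. -/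
theorem sigmaConcave_distributional_ineq (θ κ : ℝ) (hθ : 0 < θ) (u : ℝ → ℝ)
    (hpos : ∀ r ∈ Set.Icc 0 θ, 0 < u r)
    (hconc : IsSigmaConcaveOn κ (Set.Icc 0 θ) u)
    (φ : ℝ → ℝ) (hφ : ContDiff ℝ (⊤ : ℕ∞) φ) (hφ0 : ∀ x, 0 ≤ φ x)
    (hφsupp : tsupport φ ⊆ Set.Ioo 0 θ) (hφc : HasCompactSupport φ) :
    ∫ r in (0:ℝ)..θ, u r * (deriv (deriv φ) r + κ * φ r) ≤ 0 := by
  rw [intervalIntegral.integral_eq_integral_of_support_subset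
    ((support_mul_deriv_deriv_add_mul_subset u φ κ).trans (hφsupp.trans Ioo_subset_Ioc_self))]
  exact sigmaConcave_distributional_ineq_general hconc (contDiff_infty.1 hφ 2) hφ0 hφc
    (by rwa [interior_Icc])
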